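/- Let d ≥ 1, s ∈ [1,∞), R > 0, B ⊂ ℝ^d compact, and let u : ℝ^d → ℂ be smooth, supported in B, with ‖∂_x^α u‖_{L^∞} ≤ C₀ · R^{|α|} · (|α|!)^s for all multi-indices α ∈ ℕ^d. Then for every even natural number m, ‖ |ξ|^m û(ξ) ‖_{L²_ξ} ≤ |B|^{1/2} · C₀ · C(d,m) · R^m · (m!)^s, where C(d,m) is a combinatorial constant depending only on d and m, and û denotes the Fourier transform of u. -/

import Mathlib

open MeasureTheory Real
open scoped FourierTransform ENNReal

noncomputable section

/-- `ℝ^d` as a Euclidean space. -/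
abbrev E (d : ℕ) := EuclideanSpace ℝ (Fin d)

/-- The Japanese bracket `⟨ξ⟩ = (1 + |ξ|²)^{1/2}`. -/
def jap {d : ℕ} (ξ : E d) : ℝ := Real.sqrt (1 + ‖ξ‖ ^ 2)

/-- Partial derivative in the `i`-th coordinate direction. -/
def pder {d : ℕ} {F : Type*} [NormedAddCommGroup F] [NormedSpace ℝ F]
    (i : Fin d) (f : E d → F) : E d → F :=
  fun x => fderiv ℝ f x (EuclideanSpace.single i 1)

/-- Multi-index partial derivative `∂^α`. -/
def mpder {d : ℕ} {F : Type*} [NormedAddCommGroup F] [NormedSpace ℝ F]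
    (α : Fin d → ℕ) (f : E d → F) : E d → F :=
  (List.finRange d).foldr (fun i g => (pder i)^[α i] g) f

/-!
Let `e₁, …, eₙ` be an orthonormal basis and `ξᵢ = ⟪ξ, eᵢ⟫`. The power mean inequality gives
`|ξ|^(2m) ≤ n^(m-1) ∑ ξᵢ^(2m)`, and `(2π i ξᵢ)^m û` is the Fourier transform of `∂ᵢ^m u`. Hence, by
Plancherel, `‖|ξ|^m û‖₂² ≤ n^(m-1) (2π)^(-2m) ∑ ‖∂ᵢ^m u‖₂²`: pure derivatives take the place of
`(-Δ)^(m/2) u`. Each `∂ᵢ^m u` is supported in `B`, so `‖∂ᵢ^m u‖₂ ≤ |B|^(1/2) ‖∂ᵢ^m u‖_∞`, which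
yields the constant `(√n / 2π)^m`.
-/

open LineDeriv SchwartzMap
open scoped NNReal

section PowerMean

variable {ι V : Type*} [Fintype ι] [NormedAddCommGroup V] [InnerProductSpace ℝ V]

theorem norm_pow_two_mul_le_card_pow_mul_mean [Nonempty ι] (b : OrthonormalBasis ι ℝ V) (v : V)
    (m : ℕ) :
    ‖v‖ ^ (2 * m) ≤
      Fintype.card ι ^ m * ((∑ i, inner ℝ v (b i) ^ (2 * m)) / Fintype.card ι) := by
  have hn : (Fintype.card ι : ℝ) ≠ 0 := Nat.cast_ne_zero.mpr Fintype.card_ne_zero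
  have mean_pow_le : ((∑ i, inner ℝ v (b i) ^ 2) / Fintype.card ι) ^ m ≤
      (∑ i, (inner ℝ v (b i) ^ 2) ^ m) / Fintype.card ι := by
    simpa only [inv_mul_eq_div, ← Finset.sum_div] using
      Real.pow_arith_mean_le_arith_mean_pow Finset.univ (fun _ ↦ (Fintype.card ι : ℝ)⁻¹)
        (fun i ↦ inner ℝ v (b i) ^ 2) (fun _ _ ↦ by positivity) (by simp [hn])
        (fun _ _ ↦ sq_nonneg _) m
  calc ‖v‖ ^ (2 * m) = Fintype.card ι ^ m * ((∑ i, inner ℝ v (b i) ^ 2) / Fintype.card ι) ^ m := by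
        rw [b.sum_sq_inner_left, ← mul_pow, mul_div_cancel₀ _ hn, pow_mul]
    _ ≤ _ := by simp only [pow_mul]; gcongr

end PowerMean

section LpBounds

variable {X F G : Type*} [MeasurableSpace X] {μ : Measure X}
  [NormedAddCommGroup F] [NormedAddCommGroup G]

theorem eLpNorm_two_sq (f : X → F) : eLpNorm f 2 μ ^ 2 = ∫⁻ x, ‖f x‖ₑ ^ 2 ∂μ := by
  simpa using eLpNorm_nnreal_pow_eq_lintegral (f := f) (μ := μ) (two_ne_zero (α := ℝ≥0))

theorem eLpNorm_two_le_mul_of_sq_le_mean {ι : Type*} [Fintype ι] [Nonempty ι] {g : X → G}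
    {h : ι → X → F} (hh : ∀ i, AEStronglyMeasurable (h i) μ) {c : ℝ} (hc : 0 ≤ c)
    (hgh : ∀ x, ‖g x‖ ^ 2 ≤ c ^ 2 * ((∑ i, ‖h i x‖ ^ 2) / Fintype.card ι))
    {K : ℝ≥0∞} (hK : ∀ i, eLpNorm (h i) 2 μ ≤ K) :
    eLpNorm g 2 μ ≤ ENNReal.ofReal c * K := by
  have hn : (0 : ℝ) < Fintype.card ι := Nat.cast_pos.mpr Fintype.card_pos
  have enorm_sq_le (x : X) :
      ‖g x‖ₑ ^ 2 ≤ ENNReal.ofReal c ^ 2 * ((∑ i, ‖h i x‖ₑ ^ 2) / Fintype.card ι) := by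
    have := ENNReal.ofReal_le_ofReal (hgh x)
    rwa [ENNReal.ofReal_mul (by positivity), ENNReal.ofReal_div_of_pos hn,
      ENNReal.ofReal_sum_of_nonneg fun _ _ ↦ by positivity, ENNReal.ofReal_natCast,
      ENNReal.ofReal_pow hc, ENNReal.ofReal_pow (norm_nonneg _), ofReal_norm,
      Finset.sum_congr rfl fun i _ ↦ by
        rw [ENNReal.ofReal_pow (norm_nonneg (h i x)), ofReal_norm]] at this
  refine (ENNReal.pow_le_pow_left_iff two_ne_zero).mp ?_
  calc eLpNorm g 2 μ ^ 2
      ≤ ∫⁻ x, ENNReal.ofReal c ^ 2 * ((∑ i, ‖h i x‖ₑ ^ 2) / Fintype.card ι) ∂μ := by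
        rw [eLpNorm_two_sq]
        exact lintegral_mono enorm_sq_le
    _ = ENNReal.ofReal c ^ 2 * ((∑ i, eLpNorm (h i) 2 μ ^ 2) / Fintype.card ι) := by
        simp_rw [eLpNorm_two_sq, div_eq_mul_inv]
        rw [lintegral_const_mul' _ _ (by finiteness), lintegral_mul_const' _ _ (by simp),
          lintegral_finsetSum' _ fun i _ ↦ (hh i).enorm.pow_const 2]
    _ ≤ ENNReal.ofReal c ^ 2 * ((∑ _i : ι, K ^ 2) / Fintype.card ι) := by
        gcongr with i
        exact hK i
    _ = (ENNReal.ofReal c * K) ^ 2 := by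
        rw [Finset.sum_const, Finset.card_univ, nsmul_eq_mul,
          ENNReal.mul_div_right_comm, ENNReal.div_self (by simp) (by simp), one_mul, mul_pow]

theorem eLpNorm_le_of_support_subset (p : ℝ≥0∞) {B : Set X} {f : X → F}
    (hf : Function.support f ⊆ B) {M : ℝ} (hM : ∀ x, ‖f x‖ ≤ M) :
    eLpNorm f p μ ≤ μ B ^ p.toReal⁻¹ * ENNReal.ofReal M := by
  rw [← eLpNorm_restrict_eq_of_support_subset hf]
  simpa only [Measure.restrict_apply_univ] using
    eLpNorm_le_of_ae_bound (p := p) (μ := μ.restrict B) (.of_forall hM)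

theorem eLpNorm_two_le_of_support_subset {B : Set X} (hB : μ B ≠ ∞) {f : X → F}
    (hf : Function.support f ⊆ B) {M : ℝ} (hM : ∀ x, ‖f x‖ ≤ M) :
    eLpNorm f 2 μ ≤ ENNReal.ofReal (√(μ B).toReal * M) := by
  refine (eLpNorm_le_of_support_subset 2 hf hM).trans_eq ?_
  rw [ENNReal.ofReal_mul (by positivity), Real.sqrt_eq_rpow, one_div, ENNReal.toReal_ofNat,
    ← ENNReal.ofReal_rpow_of_nonneg (by positivity) (by positivity), ENNReal.ofReal_toReal hB]

end LpBounds

section Schwartz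

theorem tsupport_iterate_lineDerivOp_subset {V F : Type*} [NormedAddCommGroup V] [NormedSpace ℝ V]
    [NormedAddCommGroup F] [NormedSpace ℝ F] (f : 𝓢(V, F)) (v : V) (m : ℕ) :
    tsupport ⇑((∂_{v})^[m] f) ⊆ tsupport f := by
  rw [← iteratedLineDerivOp_const_eq_iter_lineDerivOp]
  exact tsupport_iteratedLineDerivOp_subset _ f

variable {V F : Type*} [NormedAddCommGroup V] [InnerProductSpace ℝ V] [FiniteDimensional ℝ V]
  [MeasurableSpace V] [BorelSpace V] [NormedAddCommGroup F] [InnerProductSpace ℂ F]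

theorem fourier_iterate_lineDerivOp_apply (f : 𝓢(V, F)) (v ξ : V) (m : ℕ) :
    𝓕 ((∂_{v})^[m] f) ξ = (2 * π * Complex.I * inner ℝ ξ v) ^ m • 𝓕 f ξ := by
  induction m with
  | zero => simp
  | succ m ih =>
    have hv : (fun x : V ↦ inner ℝ x v).HasTemperateGrowth := by fun_prop
    rw [Function.iterate_succ_apply', fourier_lineDerivOp_eq, _root_.smul_apply,
      smulLeftCLM_apply_apply hv, ih, ← Complex.coe_smul, smul_smul, smul_smul,
      pow_succ']

theorem norm_fourier_iterate_lineDerivOp_apply (f : 𝓢(V, F)) (v ξ : V) (m : ℕ) :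
    ‖𝓕 ((∂_{v})^[m] f) ξ‖ = (2 * π) ^ m * |inner ℝ ξ v| ^ m * ‖𝓕 f ξ‖ := by
  rw [fourier_iterate_lineDerivOp_apply, norm_smul, ← mul_pow]
  simp [abs_of_pos Real.pi_pos]

theorem norm_pow_smul_fourier_sq_le {ι : Type*} [Fintype ι] [Nonempty ι]
    (b : OrthonormalBasis ι ℝ V) (f : 𝓢(V, F)) (m : ℕ) (ξ : V) :
    ‖‖ξ‖ ^ m • 𝓕 f ξ‖ ^ 2 ≤ ((√(Fintype.card ι) / (2 * π)) ^ m) ^ 2 *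
      ((∑ i, ‖𝓕 ((∂_{b i})^[m] f) ξ‖ ^ 2) / Fintype.card ι) := by
  have sum_eq : ∑ i, ‖𝓕 ((∂_{b i})^[m] f) ξ‖ ^ 2 =
      ((2 * π) ^ m) ^ 2 * ‖𝓕 f ξ‖ ^ 2 * ∑ i, inner ℝ ξ (b i) ^ (2 * m) := by
    rw [Finset.mul_sum]
    refine Finset.sum_congr rfl fun i _ ↦ ?_
    rw [norm_fourier_iterate_lineDerivOp_apply, ← (even_two_mul m).pow_abs]
    ring
  calc ‖‖ξ‖ ^ m • 𝓕 f ξ‖ ^ 2 = ‖ξ‖ ^ (2 * m) * ‖𝓕 f ξ‖ ^ 2 := by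
        rw [norm_smul, norm_pow, norm_norm]
        ring
    _ ≤ Fintype.card ι ^ m * ((∑ i, inner ℝ ξ (b i) ^ (2 * m)) / Fintype.card ι) *
          ‖𝓕 f ξ‖ ^ 2 := by
        gcongr
        exact norm_pow_two_mul_le_card_pow_mul_mean b ξ m
    _ = _ := by
        rw [sum_eq, div_pow, div_pow, pow_right_comm √_, Real.sq_sqrt (Nat.cast_nonneg _)]
        field_simp

variable [CompleteSpace F]

theorem eLpNorm_fourier_two_eq (f : 𝓢(V, F)) :
    eLpNorm (𝓕 f : 𝓢(V, F)) 2 volume = eLpNorm f 2 volume := by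
  have h := norm_fourier_toL2_eq f
  rwa [norm_toLp, norm_toLp, ENNReal.toReal_eq_toReal_iff'
    ((𝓕 f).memLp 2 volume).eLpNorm_ne_top (f.memLp 2 volume).eLpNorm_ne_top] at h

theorem eLpNorm_norm_pow_smul_fourier_le {ι : Type*} [Fintype ι] [Nonempty ι]
    (b : OrthonormalBasis ι ℝ V) (f : 𝓢(V, F)) (m : ℕ) {K : ℝ≥0∞}
    (hK : ∀ i, eLpNorm ⇑((∂_{b i})^[m] f) 2 volume ≤ K) :
    eLpNorm (fun ξ ↦ ‖ξ‖ ^ m • 𝓕 f ξ) 2 volume ≤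
      ENNReal.ofReal ((√(Fintype.card ι) / (2 * π)) ^ m) * K :=
  eLpNorm_two_le_mul_of_sq_le_mean (fun i ↦ (𝓕 ((∂_{b i})^[m] f)).continuous.aestronglyMeasurable)
    (by positivity) (norm_pow_smul_fourier_sq_le b f m)
    fun i ↦ (eLpNorm_fourier_two_eq _).trans_le (hK i)

end Schwartz

section PartialDerivatives

theorem foldr_iterate_single {ι β : Type*} [DecidableEq ι] (φ : ι → β → β) (i : ι) (m : ℕ) (x : β)
    {l : List ι} (hl : l.Nodup) :
    l.foldr (fun j ↦ (φ j)^[(Pi.single i m : ι → ℕ) j]) x = if i ∈ l then (φ i)^[m] x else x := by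
  induction l with
  | nil => simp
  | cons j l ih =>
    obtain ⟨hj, hl⟩ := List.nodup_cons.mp hl
    rw [List.foldr_cons, ih hl]
    obtain rfl | hij := eq_or_ne i j
    · simp [hj]
    · simp [hij, hij.symm]

variable {d : ℕ} {F : Type*} [NormedAddCommGroup F] [NormedSpace ℝ F]

theorem mpder_single (i : Fin d) (m : ℕ) (f : E d → F) :
    mpder (Pi.single i m) f = (pder i)^[m] f :=
  (foldr_iterate_single pder i m f (List.nodup_finRange d)).trans (if_pos (List.mem_finRange i))

theorem coe_iterate_lineDerivOp_single (i : Fin d) (m : ℕ) (f : 𝓢(E d, F)) :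
    ⇑((∂_{(EuclideanSpace.single i 1 : E d)})^[m] f) = (pder i)^[m] f :=
  Function.Semiconj.iterate_right (f := fun g : 𝓢(E d, F) ↦ ⇑g) (fun _ ↦ rfl) m f

end PartialDerivatives

theorem stmt_18_general {F : Type*} [NormedAddCommGroup F] [InnerProductSpace ℂ F]
    [CompleteSpace F] {d : ℕ} (hd : 1 ≤ d) {B : Set (E d)} (hB : IsCompact B) {u : E d → F}
    (hu : ContDiff ℝ (⊤ : ℕ∞) u) (hsupp : Function.support u ⊆ B) {m : ℕ} {M : ℝ}
    (hM : ∀ α : Fin d → ℕ, ∑ i, α i = m → ∀ x, ‖mpder α u x‖ ≤ M) :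
    eLpNorm (fun ξ : E d ↦ ‖ξ‖ ^ m • 𝓕 u ξ) 2 volume ≤
      ENNReal.ofReal ((√d / (2 * π)) ^ m * (√(volume B).toReal * M)) := by
  have : Nonempty (Fin d) := Fin.pos_iff_nonempty.mp hd
  have hcs : HasCompactSupport u := .of_support_subset_isCompact hB hsupp
  let f : 𝓢(E d, F) := hcs.toSchwartzMap hu
  have hf : tsupport f ⊆ B := closure_minimal hsupp hB.isClosed
  have hderiv (i : Fin d) :
      eLpNorm ⇑((∂_{EuclideanSpace.basisFun (Fin d) ℝ i})^[m] f) 2 volume ≤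
        ENNReal.ofReal (√(volume B).toReal * M) := by
    refine eLpNorm_two_le_of_support_subset hB.measure_ne_top ?_ fun x ↦ ?_
    · exact (subset_tsupport _).trans ((tsupport_iterate_lineDerivOp_subset f _ m).trans hf)
    · rw [EuclideanSpace.basisFun_apply, coe_iterate_lineDerivOp_single, ← mpder_single]
      exact hM (Pi.single i m) (by simp) x
  have coe_f : ⇑f = u := rfl
  rw [ENNReal.ofReal_mul (by positivity)]
  simpa only [Fintype.card_fin, fourier_coe, coe_f] using
    eLpNorm_norm_pow_smul_fourier_le _ f m hderiv

/-- Moment bound for the Fourier transform of a compactly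
supported Gevrey function: for even `m`,
`‖|ξ|^m û‖_{L²} ≤ |B|^{1/2} C₀ C(d,m) R^m (m!)^s`. -/
theorem stmt_18 :
    ∃ C : ℕ → ℕ → ℝ,
      ∀ (d : ℕ), 1 ≤ d →
      ∀ (s R : ℝ), 1 ≤ s → 0 < R →
      ∀ (B : Set (E d)), IsCompact B →
      ∀ (u : E d → ℂ) (C₀ : ℝ),
        ContDiff ℝ (⊤ : ℕ∞) u →
        Function.support u ⊆ B →
        (∀ (α : Fin d → ℕ) (x : E d),
          ‖mpder α u x‖ ≤ C₀ * R ^ (∑ i, α i) * (Nat.factorial (∑ i, α i) : ℝ) ^ s) →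
      ∀ (m : ℕ), Even m →
        eLpNorm (fun ξ : E d => ‖ξ‖ ^ m • 𝓕 u ξ) 2 volume
          ≤ ENNReal.ofReal
              (Real.sqrt ((volume B).toReal) * C₀ * C d m * R ^ m *
                (Nat.factorial m : ℝ) ^ s) := by
  refine ⟨fun d m ↦ (√d / (2 * π)) ^ m, fun d hd s R _ _ B hB u C₀ hu hsupp hbound m _ ↦ ?_⟩
  exact (stmt_18_general hd hB hu hsupp fun α hα x ↦ hα ▸ hbound α x).trans_eq (by ring_nf)
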